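/- arXiv:1312.1744 — 2 statements merged into one kernel-verified Lean document; each statement's English description precedes it below -/
import Mathlib

section
/- Let p ≥ q > 0 and let a < b be real numbers. For every measurable function f : [a,b] → (0,∞), ∫_a^b ((1/(x-a)) ∫_a^x f(y) dy)^{-p} dx ≤ ((p+1)/p)^q · ∫_a^b ((1/(x-a)) ∫_a^x f(y) dy)^{-p+q} · f(x)^{-q} dx (both sides possibly infinite). -/
open MeasureTheory Set

lemma ac_comp {φ g : ℝ → ℝ} {a b : ℝ} {K : NNReal} {s : Set ℝ}
    (hg : AbsolutelyContinuousOnInterval g a b) (hφ : LipschitzOnWith K φ s)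
    (hm : ∀ x ∈ uIcc a b, g x ∈ s) :
    AbsolutelyContinuousOnInterval (fun x => φ (g x)) a b := by
  rw [absolutelyContinuousOnInterval_iff] at hg ⊢
  intro ε hε
  obtain ⟨δ, hδ, h⟩ := hg (ε / (K + 1)) (by positivity)
  refine ⟨δ, hδ, fun E hE hl => ?_⟩
  have h1 := h E hE hl
  calc _ ≤ ∑ i ∈ Finset.range E.1, K * dist (g (E.2 i).1) (g (E.2 i).2) := by
        apply Finset.sum_le_sum
        intro i hi
        exact hφ.dist_le_mul _ (hm _ (hE.1 i hi).1) _ (hm _ (hE.1 i hi).2)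
    _ = K * ∑ i ∈ Finset.range E.1, dist (g (E.2 i).1) (g (E.2 i).2) := by
        rw [Finset.mul_sum]
    _ ≤ K * (ε / (K + 1)) := by gcongr
    _ < (K + 1) * (ε / (K + 1)) := by gcongr; linarith
    _ = ε := by field

lemma cd_aux {a x r : ℝ} (h : a < x) : ContDiffAt ℝ 1 (fun x => (x - a) ^ r) x := by
  have h1 : ContDiffAt ℝ 1 (fun x : ℝ => x - a) x := by fun_prop
  have h2 : x - a ≠ 0 := by linarith
  exact h1.rpow_const_of_ne h2

lemma enn_rpow_anti {x y : ENNReal} {z : ℝ} (hz : z ≤ 0) (h : x ≤ y) : y ^ z ≤ x ^ z := by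
  rw [← neg_neg z, ENNReal.rpow_neg y, ENNReal.rpow_neg x]
  exact ENNReal.inv_le_inv.2 (ENNReal.rpow_le_rpow h (by linarith))

lemma bern {s q : ℝ} (hs : 0 < s) (hq : 0 < q) : 1 + q * (1 - s) ≤ s ^ (-q) := by
  have h1 : 1 - s ≤ - Real.log s := by linarith [Real.log_le_sub_one_of_pos hs]
  rw [Real.rpow_def_of_pos hs]
  have := Real.add_one_le_exp (Real.log s * -q)
  nlinarith

/-- pointwise inequality; `t = x - a`. -/
lemma pointwise {p q t F f : ℝ} (hq : 0 < q) (hpq : q ≤ p) (ht : 0 < t) (hF : 0 < F)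
    (hf : 0 < f) :
    (t⁻¹ * F) ^ (-p) + q / (p + 1) * ((p + 1) * t ^ p * F ^ (-p)
        + t ^ (p + 1) * (f * (-p) * F ^ (-p - 1)))
      ≤ ((p + 1) / p) ^ q * ((t⁻¹ * F) ^ (-p + q) * f ^ (-q)) := by
  have hp : 0 < p := by linarith
  have hA : 0 < t⁻¹ * F := by positivity
  have e1 : (t⁻¹ * F) ^ (-p) = t ^ p * F ^ (-p) := by
    rw [Real.mul_rpow (by positivity) hF.le, Real.inv_rpow ht.le, ← Real.rpow_neg ht.le, neg_neg]
  have e2 : t ^ (p + 1) = t ^ p * t := by rw [Real.rpow_add_one ht.ne']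
  have e3 : F ^ (-p - 1) = F ^ (-p) / F := by rw [Real.rpow_sub_one hF.ne']
  set s := (p / (p + 1)) * (f / (t⁻¹ * F)) with hs
  have hs0 : 0 < s := by positivity
  have e4 : ((p + 1) / p) ^ q * ((t⁻¹ * F) ^ (-p + q) * f ^ (-q))
      = (t⁻¹ * F) ^ (-p) * s ^ (-q) := by
    rw [hs]
    clear_value s
    generalize t⁻¹ * F = A at hA
    rw [Real.mul_rpow (by positivity) (by positivity), Real.div_rpow hf.le hA.le,
      Real.rpow_add hA, Real.rpow_neg hA.le q, Real.rpow_neg (by positivity : 0 ≤ p / (p+1)),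
      ← Real.inv_rpow (by positivity), inv_div]
    field_simp
  rw [e4]
  have hb := mul_le_mul_of_nonneg_left (bern hs0 hq) (Real.rpow_nonneg hA.le (-p))
  refine le_trans (le_of_eq ?_) hb
  rw [e1, e2, e3, hs]
  field_simp
  ring

lemma ofReal_integral_le' {μ : Measure ℝ} {w : ℝ → ℝ} (hw : Integrable w μ) :
    ENNReal.ofReal (∫ x, w x ∂μ) ≤ ∫⁻ x, ENNReal.ofReal (w x) ∂μ := by
  rw [integral_eq_lintegral_pos_part_sub_lintegral_neg_part hw]
  refine le_trans (ENNReal.ofReal_le_ofReal (sub_le_self _ ENNReal.toReal_nonneg)) ?_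
  exact ENNReal.ofReal_toReal_le

set_option maxHeartbeats 1000000 in
lemma key {p q a ε d δ : ℝ} (hq : 0 < q) (hpq : q ≤ p) (hε : a < ε) (hd : ε ≤ d) (hδ : 0 < δ)
    {f : ℝ → ℝ} (hf : IntervalIntegrable f volume a d) (hfδ : ∀ x ∈ Icc a d, δ ≤ f x) :
    ∫⁻ x in Ioc ε d, ENNReal.ofReal (((x - a)⁻¹ * ∫ y in a..x, f y) ^ (-p)) ≤
     (∫⁻ x in Ioc ε d, ENNReal.ofReal
      (((p + 1) / p) ^ q * (((x - a)⁻¹ * ∫ y in a..x, f y) ^ (-p + q) * f x ^ (-q))))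
      + ENNReal.ofReal (q / (p + 1) * ((ε - a) * δ ^ (-p))) := by
  have hp : 0 < p := by linarith
  obtain ⟨F, hFdef⟩ : ∃ F : ℝ → ℝ, F = fun x => ∫ y in a..x, f y := ⟨_, rfl⟩
  have hFx : ∀ x, ∫ y in a..x, f y = F x := fun x => by rw [hFdef]
  simp only [hFx]
  have had : a ≤ d := by linarith
  have hint : ∀ x ∈ Icc a d, IntervalIntegrable f volume a x := fun x hx =>
    hf.mono_set (by rw [uIcc_of_le hx.1, uIcc_of_le had]; exact Icc_subset_Icc_right hx.2)
  have hFlow : ∀ x ∈ Icc a d, δ * (x - a) ≤ F x := by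
    intro x hx
    have := intervalIntegral.integral_mono_on hx.1 (intervalIntegrable_const (c := δ))
      (hint x hx) (fun y hy => hfδ y ⟨hy.1, hy.2.trans hx.2⟩)
    simpa [mul_comm, hFx] using this
  have hFac0 : AbsolutelyContinuousOnInterval F a d := by
    rw [hFdef]
    exact hf.absolutelyContinuousOnInterval_intervalIntegral (by simp)
  have hsub : uIcc ε d ⊆ uIcc a d := by
    rw [uIcc_of_le hd, uIcc_of_le had]; exact Icc_subset_Icc_left hε.le
  have hFac : AbsolutelyContinuousOnInterval F ε d := hFac0.mono hsub
  obtain ⟨M, hM⟩ := hFac.exists_bound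
  have hm : ∀ x ∈ uIcc ε d, F x ∈ Icc (δ * (ε - a)) M := by
    intro x hx
    have h2 := hM x hx
    rw [uIcc_of_le hd] at hx
    refine ⟨le_trans ?_ (hFlow x ⟨by linarith [hx.1], hx.2⟩), (le_abs_self _).trans h2⟩
    have := hx.1
    gcongr
  have hm0 : 0 < δ * (ε - a) := mul_pos hδ (by linarith)
  have hFpos : ∀ x ∈ uIcc ε d, 0 < F x := fun x hx => hm0.trans_le (hm x hx).1
  obtain ⟨K, hK⟩ : ∃ K, LipschitzOnWith K (fun u : ℝ => u ^ (-p)) (Icc (δ * (ε - a)) M) := by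
    refine ContDiffOn.exists_lipschitzOnWith (n := 1) ?_ one_ne_zero (convex_Icc _ _) isCompact_Icc
    intro u hu
    exact (Real.contDiffAt_rpow_const_of_ne (hm0.trans_le hu.1).ne').contDiffWithinAt
  have hFp : AbsolutelyContinuousOnInterval (fun x => F x ^ (-p)) ε d :=
    ac_comp (φ := fun u : ℝ => u ^ (-p)) (g := F) hFac hK hm
  have htp : AbsolutelyContinuousOnInterval (fun x => (x - a) ^ (p + 1)) ε d := by
    apply ContDiffOn.absolutelyContinuousOnInterval
    intro x hx
    rw [uIcc_of_le hd] at hx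
    exact (cd_aux (by linarith [hx.1])).contDiffWithinAt
  set G : ℝ → ℝ := fun x => (x - a) ^ (p + 1) * F x ^ (-p) with hG
  have hGac : AbsolutelyContinuousOnInterval G ε d := htp.fun_mul hFp
  have hGint := hGac.intervalIntegrable_deriv
  have hGeq := hGac.integral_deriv_eq_sub
  have hderiv : ∀ᵐ x, x ∈ uIcc ε d → deriv G x = (p + 1) * (x - a) ^ p * F x ^ (-p)
        + (x - a) ^ (p + 1) * (f x * (-p) * F x ^ (-p - 1)) := by
    filter_upwards [hf.ae_hasDerivAt_integral] with x hx hxm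
    have h1 := hx (hsub hxm) a (by simp)
    rw [← hFdef] at h1
    have h2 := h1.rpow_const (p := -p) (Or.inl (hFpos x hxm).ne')
    have hxa : x - a ≠ 0 := by
      rw [uIcc_of_le hd] at hxm; linarith [hxm.1]
    have h3 := ((hasDerivAt_id x).sub_const a).rpow_const (p := p + 1) (Or.inl hxa)
    have h4 := (h3.mul h2).deriv
    refine Eq.trans h4 ?_
    simp
  have hucont : ContinuousOn (fun x => ((x - a)⁻¹ * F x) ^ (-p)) (uIcc ε d) := by
    have hxa : ∀ x ∈ uIcc ε d, 0 < x - a := by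
      intro x hx; rw [uIcc_of_le hd] at hx; linarith [hx.1]
    refine ContinuousOn.rpow_const ?_ ?_
    · refine ContinuousOn.mul (ContinuousOn.inv₀ (by fun_prop) fun x hx => (hxa x hx).ne') 
        hFac.continuousOn
    · intro x hx
      left
      have := hxa x hx; have := hFpos x hx; positivity
  have huint := hucont.intervalIntegrable (μ := volume)
  have hGe : G ε ≤ (ε - a) * δ ^ (-p) := by
    have h0 : 0 < ε - a := by linarith
    have : F ε ^ (-p) ≤ (δ * (ε - a)) ^ (-p) :=
      Real.rpow_le_rpow_of_nonpos hm0 (hm ε (by simp)).1 (by linarith)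
    calc G ε ≤ (ε - a) ^ (p + 1) * (δ * (ε - a)) ^ (-p) := by
          simp only [hG]; gcongr
      _ = (ε - a) * δ ^ (-p) := by
          rw [Real.mul_rpow hδ.le h0.le, Real.rpow_add_one h0.ne', Real.rpow_neg h0.le]
          field_simp
  have hGd : 0 ≤ G d := by
    have h0 : 0 < d - a := by linarith
    have := hFpos d (by simp)
    simp only [hG]; positivity
  have huv := huint.add (hGint.const_mul (q / (p + 1)))
  have hI : ∫ x in ε..d, ((x - a)⁻¹ * F x) ^ (-p) ≤
      (∫ x in ε..d, (((x - a)⁻¹ * F x) ^ (-p) + q / (p + 1) * deriv G x))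
        + q / (p + 1) * ((ε - a) * δ ^ (-p)) := by
    rw [intervalIntegral.integral_add huint (hGint.const_mul _),
      intervalIntegral.integral_const_mul, hGeq]
    have : 0 ≤ q / (p + 1) := by positivity
    nlinarith [mul_le_mul_of_nonneg_left hGe this, mul_nonneg this hGd]
  rw [intervalIntegral.integral_of_le hd, intervalIntegral.integral_of_le hd] at hI
  rw [← ofReal_integral_eq_lintegral_ofReal]
  · refine (ENNReal.ofReal_le_ofReal hI).trans (ENNReal.ofReal_add_le.trans ?_)
    gcongr
    refine (ofReal_integral_le' huv.1).trans ?_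
    refine lintegral_mono_ae ?_
    filter_upwards [ae_restrict_mem measurableSet_Ioc, ae_restrict_of_ae hderiv] with x hx hdx
    have hxm : x ∈ uIcc ε d := by rw [uIcc_of_le hd]; exact ⟨hx.1.le, hx.2⟩
    rw [hdx hxm]
    apply ENNReal.ofReal_le_ofReal
    exact pointwise hq hpq (by linarith [hx.1]) (hFpos x hxm)
      (hδ.trans_le (hfδ x ⟨by linarith [hx.1], hx.2⟩))
  · exact huint.1
  · refine (ae_restrict_mem measurableSet_Ioc).mono fun x hx => ?_
    have h0 : 0 < x - a := by linarith [hx.1]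
    have := hFpos x (by rw [uIcc_of_le hd]; exact ⟨hx.1.le, hx.2⟩)
    simp only [Pi.zero_apply]; positivity

/-- The average. -/
noncomputable def avg (a : ℝ) (f : ℝ → ℝ) (x : ℝ) : ENNReal :=
  (ENNReal.ofReal (x - a))⁻¹ * ∫⁻ y in Ioc a x, ENNReal.ofReal (f y)

lemma key2 {p q a b ε d δ : ℝ} (hq : 0 < q) (hpq : q ≤ p) (hε : a < ε) (hd : ε ≤ d) (hdb : d ≤ b)
    (hδ : 0 < δ) {f : ℝ → ℝ} (hfm : Measurable f) (hfδ : ∀ x ∈ Icc a b, δ ≤ f x)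
    (hfin : ∫⁻ y in Ioc a d, ENNReal.ofReal (f y) ≠ ⊤) :
    ∫⁻ x in Ioc ε d, avg a f x ^ (-p) ≤
      ENNReal.ofReal (((p + 1) / p) ^ q) *
        (∫⁻ x in Ioc a b, avg a f x ^ (-p + q) * ENNReal.ofReal (f x) ^ (-q))
      + ENNReal.ofReal (q / (p + 1) * ((ε - a) * δ ^ (-p))) := by
  have had : a ≤ d := by linarith
  have hp : 0 < p := by linarith
  have hnn : ∀ x ≤ d, 0 ≤ᵐ[volume.restrict (Ioc a x)] f := fun x hx =>
    (ae_restrict_mem measurableSet_Ioc).mono fun y hy =>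
      hδ.le.trans (hfδ y ⟨hy.1.le, hy.2.trans (hx.trans hdb)⟩)
  have hint : IntegrableOn f (Ioc a d) := by
    refine (lintegral_ofReal_ne_top_iff_integrable hfm.aestronglyMeasurable (hnn d le_rfl)).1 hfin
  have hii : IntervalIntegrable f volume a d :=
    (intervalIntegrable_iff_integrableOn_Ioc_of_le had).2 hint
  have hk := key hq hpq hε hd hδ hii (fun x hx => hfδ x ⟨hx.1, hx.2.trans hdb⟩)
  have hA : ∀ x ∈ Ioc ε d, avg a f x = ENNReal.ofReal ((x - a)⁻¹ * ∫ y in a..x, f y) ∧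
      0 < (x - a)⁻¹ * ∫ y in a..x, f y := by
    intro x hx
    have h0 : 0 < x - a := by linarith [hx.1]
    have hix : IntegrableOn f (Ioc a x) := hint.mono_set (Ioc_subset_Ioc_right hx.2)
    have hlow : δ * (x - a) ≤ ∫ y in a..x, f y := by
      have := intervalIntegral.integral_mono_on (by linarith : a ≤ x)
        (intervalIntegrable_const (c := δ))
        ((intervalIntegrable_iff_integrableOn_Ioc_of_le (by linarith)).2 hix)
        (fun y hy => hfδ y ⟨hy.1, hy.2.trans (hx.2.trans hdb)⟩)
      simpa [mul_comm] using this
    have hpos : 0 < ∫ y in a..x, f y := lt_of_lt_of_le (by positivity) hlow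
    refine ⟨?_, by positivity⟩
    rw [avg, ENNReal.ofReal_mul (by positivity), ENNReal.ofReal_inv_of_pos h0,
      intervalIntegral.integral_of_le (by linarith),
      ofReal_integral_eq_lintegral_ofReal hix (hnn x hx.2)]
  calc ∫⁻ x in Ioc ε d, avg a f x ^ (-p)
      = ∫⁻ x in Ioc ε d, ENNReal.ofReal (((x - a)⁻¹ * ∫ y in a..x, f y) ^ (-p)) := by
        refine setLIntegral_congr_fun measurableSet_Ioc fun x hx => ?_
        obtain ⟨h1, h2⟩ := hA x hx
        simp only [h1]
        exact ENNReal.ofReal_rpow_of_pos h2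
    _ ≤ _ := hk
    _ ≤ _ := by
        gcongr
        rw [← lintegral_const_mul' _ _ ENNReal.ofReal_ne_top]
        refine le_trans (le_of_eq ?_) (lintegral_mono_set (Ioc_subset_Ioc hε.le hdb))
        refine setLIntegral_congr_fun measurableSet_Ioc fun x hx => ?_
        obtain ⟨h1, h2⟩ := hA x hx
        have hfx : 0 < f x := hδ.trans_le (hfδ x ⟨by linarith [hx.1], hx.2.trans hdb⟩)
        simp only [h1]
        rw [ENNReal.ofReal_rpow_of_pos h2, ENNReal.ofReal_rpow_of_pos hfx,
          ← ENNReal.ofReal_mul (by positivity), ← ENNReal.ofReal_mul (by positivity)]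

lemma key3 {p q a b δ : ℝ} (hq : 0 < q) (hpq : q ≤ p) 
    (hδ : 0 < δ) {f : ℝ → ℝ} (hfm : Measurable f) (hfδ : ∀ x ∈ Icc a b, δ ≤ f x) :
    ∫⁻ x in Ioc a b, avg a f x ^ (-p) ≤
      ENNReal.ofReal (((p + 1) / p) ^ q) *
        (∫⁻ x in Ioc a b, avg a f x ^ (-p + q) * ENNReal.ofReal (f x) ^ (-q)) := by
  have hp : 0 < p := by linarith
  set R := ENNReal.ofReal (((p + 1) / p) ^ q) *
        (∫⁻ x in Ioc a b, avg a f x ^ (-p + q) * ENNReal.ofReal (f x) ^ (-q)) with hR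
  have htop : ∀ x, ∫⁻ y in Ioc a x, ENNReal.ofReal (f y) = ⊤ → avg a f x ^ (-p) = 0 := by
    intro x hx
    rw [avg, hx, ENNReal.mul_top (by simp), ENNReal.top_rpow_of_neg (by linarith)]
  have hlow : ∀ x ∈ Ioc a b, avg a f x ^ (-p) ≤ ENNReal.ofReal (δ ^ (-p)) := by
    intro x hx
    have h0 : 0 < x - a := by linarith [hx.1]
    rw [← ENNReal.ofReal_rpow_of_pos hδ]
    refine enn_rpow_anti (by linarith) ?_
    have h1 : ENNReal.ofReal δ * ENNReal.ofReal (x - a) ≤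
        ∫⁻ y in Ioc a x, ENNReal.ofReal (f y) := by
      calc _ = ∫⁻ y in Ioc a x, ENNReal.ofReal δ := by simp
        _ ≤ _ := setLIntegral_mono' measurableSet_Ioc fun y hy =>
          ENNReal.ofReal_le_ofReal (hfδ y ⟨hy.1.le, hy.2.trans hx.2⟩)
    calc ENNReal.ofReal δ
        = (ENNReal.ofReal (x - a))⁻¹ * (ENNReal.ofReal δ * ENNReal.ofReal (x - a)) := by
          rw [mul_comm, mul_assoc, ENNReal.mul_inv_cancel (by simpa using h0) (by simp), mul_one]
      _ ≤ _ := by unfold avg; gcongr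
  have hbd : ∀ u v, a ≤ u → v ≤ b → ∫⁻ x in Ioc u v, avg a f x ^ (-p) ≤
      ENNReal.ofReal (δ ^ (-p)) * ENNReal.ofReal (v - u) := by
    intro u v hu hv
    calc _ ≤ ∫⁻ x in Ioc u v, ENNReal.ofReal (δ ^ (-p)) :=
          setLIntegral_mono' measurableSet_Ioc fun y hy =>
            hlow y ⟨hu.trans_lt hy.1, hy.2.trans hv⟩
      _ = _ := by simp
  set S := {x | x ∈ Ioc a b ∧ ∫⁻ y in Ioc a x, ENNReal.ofReal (f y) ≠ ⊤} with hS
  rcases S.eq_empty_or_nonempty with hemp | ⟨x0, hx0⟩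
  · have : ∫⁻ x in Ioc a b, avg a f x ^ (-p) = ∫⁻ x in Ioc a b, 0 := by
      refine setLIntegral_congr_fun measurableSet_Ioc fun x hx => htop x ?_
      by_contra hne
      have : x ∈ S := ⟨hx, hne⟩
      simp [hemp] at this
    rw [this]; simp
  have hbdd : BddAbove S := ⟨b, fun x hx => hx.1.2⟩
  set c := sSup S with hc
  have hac : a < c := hx0.1.1.trans_le (le_csSup hbdd hx0)
  have hcb : c ≤ b := csSup_le ⟨x0, hx0⟩ fun x hx => hx.1.2
  set K := q / (p + 1) * δ ^ (-p) + 2 * δ ^ (-p) with hK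
  have main : ∀ η > 0, ∫⁻ x in Ioc a b, avg a f x ^ (-p) ≤ R + ENNReal.ofReal (K * η) := by
    intro η hη
    obtain ⟨d, hdS, hdc⟩ := exists_lt_of_lt_csSup ⟨x0, hx0⟩ (show c - η < sSup S by linarith)
    have hdc' : d ≤ c := le_csSup hbdd hdS
    set ε := min (a + η) d with hεd
    have hε : a < ε := lt_min (by linarith) hdS.1.1
    have hεd' : ε ≤ d := min_le_right _ _
    have hεη : ε - a ≤ η := by linarith [min_le_left (a + η) d]
    have hk := key2 hq hpq hε hεd' hdS.1.2 hδ hfm hfδ hdS.2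
    have hz : ∫⁻ x in Ioc c b, avg a f x ^ (-p) = 0 := by
      have : ∫⁻ x in Ioc c b, avg a f x ^ (-p) = ∫⁻ x in Ioc c b, 0 := by
        refine setLIntegral_congr_fun measurableSet_Ioc fun x hx => htop x ?_
        by_contra hne
        have : x ∈ S := ⟨⟨hac.trans hx.1, hx.2⟩, hne⟩
        exact absurd (le_csSup hbdd this) (not_le.2 hx.1)
      rw [this]; simp
    have hD : 0 < δ ^ (-p) := by positivity
    have e1 : Ioc a b ⊆ Ioc a ε ∪ (Ioc ε d ∪ (Ioc d c ∪ Ioc c b)) := by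
      intro x hx
      simp only [mem_union, mem_Ioc] at hx ⊢
      grind
    calc ∫⁻ x in Ioc a b, avg a f x ^ (-p)
        ≤ ∫⁻ x in Ioc a ε ∪ (Ioc ε d ∪ (Ioc d c ∪ Ioc c b)), avg a f x ^ (-p) :=
          lintegral_mono_set e1
      _ ≤ (∫⁻ x in Ioc a ε, avg a f x ^ (-p)) + ((∫⁻ x in Ioc ε d, avg a f x ^ (-p))
          + ((∫⁻ x in Ioc d c, avg a f x ^ (-p)) + ∫⁻ x in Ioc c b, avg a f x ^ (-p))) := by
          refine (lintegral_union_le _ _ _).trans ?_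
          gcongr
          refine (lintegral_union_le _ _ _).trans ?_
          gcongr
          exact lintegral_union_le _ _ _
      _ ≤ ENNReal.ofReal (δ ^ (-p)) * ENNReal.ofReal η +
          ((R + ENNReal.ofReal (q / (p + 1) * (η * δ ^ (-p)))) +
           (ENNReal.ofReal (δ ^ (-p)) * ENNReal.ofReal η + 0)) := by
          refine add_le_add ((hbd a ε le_rfl (hεd'.trans hdS.1.2)).trans (by gcongr))
            (add_le_add (hk.trans ?_) (add_le_add
              ((hbd d c hdS.1.1.le hcb).trans ?_) hz.le))
          · gcongr
          · gcongr; linarith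
      _ = R + ENNReal.ofReal (K * η) := by
          have : K * η = δ ^ (-p) * η + (q / (p + 1) * (η * δ ^ (-p)) + δ ^ (-p) * η) := by
            rw [hK]; ring
          rw [this, ENNReal.ofReal_add (by positivity) (by positivity),
            ENNReal.ofReal_add (by positivity) (by positivity),
            ENNReal.ofReal_mul hD.le]
          ring
  have hlim : Filter.Tendsto (fun η : ℝ => R + ENNReal.ofReal (K * η)) (nhdsWithin 0 (Ioi 0))
      (nhds (R + ENNReal.ofReal (K * 0))) := by
    apply Filter.Tendsto.mono_left _ nhdsWithin_le_nhds
    apply Filter.Tendsto.const_add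
    exact (ENNReal.continuous_ofReal.comp (continuous_const.mul continuous_id)).tendsto 0
  have := ge_of_tendsto hlim (Filter.eventually_of_mem self_mem_nhdsWithin fun η hη => main η hη)
  simpa using this

theorem hardy_negative_exponent_general (p q a b : ℝ) (hq : 0 < q) (hpq : q ≤ p)
    (hab : a < b) (f : ℝ → ℝ) (hfm : Measurable f)
    (hfpos : ∀ x ∈ Set.Icc a b, 0 < f x) :
    (∫⁻ x in Set.Ioc a b,
        ((ENNReal.ofReal (x - a))⁻¹ * ∫⁻ y in Set.Ioc a x, ENNReal.ofReal (f y)) ^ (-p))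
      ≤ ENNReal.ofReal (((p + 1) / p) ^ q) *
        ∫⁻ x in Set.Ioc a b,
          ((ENNReal.ofReal (x - a))⁻¹ * ∫⁻ y in Set.Ioc a x, ENNReal.ofReal (f y)) ^ (-p + q) *
            (ENNReal.ofReal (f x)) ^ (-q) := by
  change ∫⁻ x in Ioc a b, avg a f x ^ (-p) ≤
      ENNReal.ofReal (((p + 1) / p) ^ q) *
        (∫⁻ x in Ioc a b, avg a f x ^ (-p + q) * ENNReal.ofReal (f x) ^ (-q))
  have hp : 0 < p := by linarith
  let e : ℕ → ℝ := fun n => 1 / ((n : ℝ) + 1)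
  have he : ∀ n, 0 < e n := fun n => Nat.one_div_pos_of_nat
  have helim : Filter.Tendsto e Filter.atTop (nhds 0) := tendsto_one_div_add_atTop_nhds_zero_nat
  have havg : ∀ n, ∀ x ∈ Ioc a b,
      avg a (fun y => f y + e n) x = avg a f x + ENNReal.ofReal (e n) := by
    intro n x hx
    have h0 : 0 < x - a := by linarith [hx.1]
    have h1 : ∫⁻ y in Ioc a x, ENNReal.ofReal (f y + e n) =
        (∫⁻ y in Ioc a x, ENNReal.ofReal (f y)) + ENNReal.ofReal (e n) * ENNReal.ofReal (x - a) := by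
      calc _ = ∫⁻ y in Ioc a x, (ENNReal.ofReal (f y) + ENNReal.ofReal (e n)) :=
            setLIntegral_congr_fun measurableSet_Ioc fun y hy =>
              ENNReal.ofReal_add (hfpos y ⟨hy.1.le, hy.2.trans hx.2⟩).le (he n).le
        _ = _ := by rw [lintegral_add_right _ measurable_const]; simp
    rw [avg, h1, mul_add, avg, mul_comm (ENNReal.ofReal (e n)), ← mul_assoc,
      ENNReal.inv_mul_cancel (by simpa using h0) (by simp), one_mul]
  have hbound : ∀ n, ∫⁻ x in Ioc a b, (avg a f x + ENNReal.ofReal (e n)) ^ (-p) ≤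
      ENNReal.ofReal (((p + 1) / p) ^ q) *
        (∫⁻ x in Ioc a b, avg a f x ^ (-p + q) * ENNReal.ofReal (f x) ^ (-q)) := by
    intro n
    have h := key3 (f := fun y => f y + e n) (a := a) (b := b) hq hpq (he n)
      (hfm.add_const _) (fun x hx => by linarith [hfpos x hx])
    calc _ = ∫⁻ x in Ioc a b, avg a (fun y => f y + e n) x ^ (-p) :=
          setLIntegral_congr_fun measurableSet_Ioc fun x hx => by simp only [havg n x hx]
      _ ≤ _ := h
      _ ≤ _ := by
          refine mul_le_mul' le_rfl ?_
          refine setLIntegral_mono' measurableSet_Ioc fun x hx => ?_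
          rw [havg n x hx]
          refine mul_le_mul' (enn_rpow_anti (by linarith) le_self_add)
            (enn_rpow_anti (by linarith)
              (ENNReal.ofReal_le_ofReal (by linarith [he n])))
  have hmeas : Measurable (avg a f) := by
    unfold avg
    refine Measurable.mul (by fun_prop) ?_
    have hmono : Monotone (fun x => ∫⁻ y in Ioc a x, ENNReal.ofReal (f y)) :=
      fun x y hxy => lintegral_mono_set (Ioc_subset_Ioc_right hxy)
    exact hmono.measurable
  have hlim : ∀ x, Filter.liminf (fun n => (avg a f x + ENNReal.ofReal (e n)) ^ (-p)) Filter.atTop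
      = avg a f x ^ (-p) := by
    intro x
    apply Filter.Tendsto.liminf_eq
    have h1 : Filter.Tendsto (fun n => avg a f x + ENNReal.ofReal (e n)) Filter.atTop
        (nhds (avg a f x)) := by
      have := (ENNReal.tendsto_ofReal helim).const_add (avg a f x)
      simpa using this
    exact (ENNReal.continuous_rpow_const.tendsto _).comp h1
  calc ∫⁻ x in Ioc a b, avg a f x ^ (-p)
      = ∫⁻ x in Ioc a b, Filter.liminf
          (fun n => (avg a f x + ENNReal.ofReal (e n)) ^ (-p)) Filter.atTop := by
        simp_rw [hlim]
    _ ≤ Filter.liminf (fun n => ∫⁻ x in Ioc a b,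
          (avg a f x + ENNReal.ofReal (e n)) ^ (-p)) Filter.atTop :=
        lintegral_liminf_le fun n => (hmeas.add_const _).pow_const _
    _ ≤ _ := by
        refine (Filter.liminf_le_liminf (Filter.Eventually.of_forall hbound)).trans ?_
        rw [Filter.liminf_const]
end

section
/- Let q > 1, M ≥ 1, and let f : [0,1) → (0,∞) be non-decreasing and satisfy ((1/t) ∫_0^t f(y) dy) · ((1/t) ∫_0^t f(y)^{-1/(q-1)} dy)^{q-1} ≤ M for every t ∈ (0,1]. Let p_0 ∈ [1,q] be the root of ((q−p_0)/(q−1))·(M·p_0)^{1/(q-1)} = 1. Then for every p ∈ (p_0, q] there exists a constant M' = M'(p,q,M) > 0 such that ((1/t) ∫_0^t f(y) dy) · ((1/t) ∫_0^t f(y)^{-1/(p-1)} dy)^{p-1} ≤ M' for every t ∈ (0,1]; in particular f^{-1/(p-1)} is integrable on (0,1). -/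
open MeasureTheory Set

/-- Weighted AM-GM in logarithmic form. -/
lemma amgm_log {q x y m : ℝ} (hq : 1 < q) (hx : 0 < x) (hy : 0 < y) (hm : 0 < m)
    (h : q * Real.log m ≤ Real.log x + (q - 1) * Real.log y) :
    q * m ≤ x + (q - 1) * y := by
  have h1 := Real.log_le_sub_one_of_pos (div_pos hx hm)
  have h2 := Real.log_le_sub_one_of_pos (div_pos hy hm)
  rw [Real.log_div hx.ne' hm.ne'] at h1
  rw [Real.log_div hy.ne' hm.ne'] at h2
  have h3 : (q - 1) * (Real.log y - Real.log m) ≤ (q - 1) * (y / m - 1) :=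
    mul_le_mul_of_nonneg_left h2 (by linarith)
  have h4 : 0 ≤ x / m + (q - 1) * (y / m) - q := by linarith
  have h5 : x / m + (q - 1) * (y / m) - q = (x + (q - 1) * y - q * m) / m := by
    field_simp
  rw [h5] at h4
  have h6 := mul_nonneg h4 hm.le
  rw [div_mul_cancel₀ _ hm.ne'] at h6
  linarith

lemma integrableOn_rpow_neg {f : ℝ → ℝ} (hf : Measurable f) (hmono : MonotoneOn f (Ico 0 1))
    (hpos : ∀ x ∈ Ico (0 : ℝ) 1, 0 < f x) {w : ℝ} (hw : 0 ≤ w) :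
    IntegrableOn (fun y => f y ^ (-w)) (Ioo 0 1) := by
  have h0 : (0 : ℝ) ∈ Ico (0 : ℝ) 1 := by simp
  refine Measure.integrableOn_of_bounded (M := f 0 ^ (-w)) (by simp)
    (hf.pow_const _).aestronglyMeasurable ?_
  refine (ae_restrict_iff' measurableSet_Ioo).2 (Filter.Eventually.of_forall fun x hx => ?_)
  have hx' : x ∈ Ico (0 : ℝ) 1 := ⟨hx.1.le, hx.2⟩
  rw [Real.norm_of_nonneg (Real.rpow_nonneg (hpos x hx').le _)]
  exact Real.rpow_le_rpow_of_nonpos (hpos 0 h0) (hmono h0 hx' hx.1.le) (by linarith)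

lemma intervalIntegrable_rpow_neg {f : ℝ → ℝ} (hf : Measurable f) (hmono : MonotoneOn f (Ico 0 1))
    (hpos : ∀ x ∈ Ico (0 : ℝ) 1, 0 < f x) {w : ℝ} (hw : 0 ≤ w) {t : ℝ} (ht : t ∈ Ioc (0 : ℝ) 1) :
    IntervalIntegrable (fun y => f y ^ (-w)) volume 0 t := by
  rw [intervalIntegrable_iff_integrableOn_Ioo_of_le ht.1.le]
  exact (integrableOn_rpow_neg hf hmono hpos hw).mono_set (Ioo_subset_Ioo_right ht.2)

/-- Right derivative of primitives. -/
lemma right_deriv {f : ℝ → ℝ} (hf : Measurable f) {a x c : ℝ}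
    (hi : IntervalIntegrable f volume a x)
    (hc : Filter.Tendsto f (nhdsWithin x (Ioi x)) (nhds c)) :
    HasDerivWithinAt (fun u => ∫ y in a..u, f y) c (Ici x) x :=
  intervalIntegral.integral_hasDerivWithinAt_of_tendsto_ae_right hi (t := Ioi x)
    hf.stronglyMeasurable.stronglyMeasurableAtFilter (hc.mono_left inf_le_left)

/-- Monotonicity of the Lyapunov function. -/
lemma lyapunov {q L μ m T : ℝ} (hq : 1 < q) (hμ : 1 < μ) (hm : 0 < m)
    (hmμ : q * Real.log m = (q - 1) * Real.log μ - L)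
    {f : ℝ → ℝ} (hf : Measurable f) (hmono : MonotoneOn f (Ico 0 1))
    (hpos : ∀ x ∈ Ico (0 : ℝ) 1, 0 < f x) (hT : T ∈ Ioc (0 : ℝ) 1)
    (hfi : IntervalIntegrable f volume 0 T)
    (hA : ∀ t ∈ Ioc (0 : ℝ) T, Real.log (∫ y in (0 : ℝ)..t, f y) +
      (q - 1) * Real.log (∫ y in (0 : ℝ)..t, f y ^ (-(1 / (q - 1)))) - q * Real.log t ≤ L)
    {t : ℝ} (ht : t ∈ Ioc (0 : ℝ) T) :
    Real.log (∫ y in (0 : ℝ)..t, f y) +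
      (q - 1) * μ * Real.log (∫ y in (0 : ℝ)..t, f y ^ (-(1 / (q - 1)))) - q * m * Real.log t ≤
    Real.log (∫ y in (0 : ℝ)..T, f y) +
      (q - 1) * μ * Real.log (∫ y in (0 : ℝ)..T, f y ^ (-(1 / (q - 1)))) - q * m * Real.log T := by
  have hs : 0 ≤ 1 / (q - 1) := by apply div_nonneg <;> linarith
  have hgi := intervalIntegrable_rpow_neg hf hmono hpos hs hT
  have hsub : ∀ x ∈ Ioc (0 : ℝ) T, uIcc 0 x ⊆ uIcc 0 T := fun x hx => by
    rw [uIcc_of_le hx.1.le, uIcc_of_le hT.1.le]; exact Icc_subset_Icc_right hx.2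
  have hΦ : ∀ x ∈ Ioc (0 : ℝ) T, 0 < ∫ y in (0 : ℝ)..x, f y := fun x hx =>
    intervalIntegral.intervalIntegral_pos_of_pos_on (hfi.mono_set (hsub x hx))
      (fun y hy => hpos y ⟨hy.1.le, hy.2.trans_le (hx.2.trans hT.2)⟩) hx.1
  have hH : ∀ x ∈ Ioc (0 : ℝ) T, 0 < ∫ y in (0 : ℝ)..x, f y ^ (-(1 / (q - 1))) := fun x hx =>
    intervalIntegral.intervalIntegral_pos_of_pos_on (hgi.mono_set (hsub x hx))
      (fun y hy => Real.rpow_pos_of_pos (hpos y ⟨hy.1.le, hy.2.trans_le (hx.2.trans hT.2)⟩) _) hx.1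
  have hIcc : ∀ x ∈ Icc t T, x ∈ Ioc (0 : ℝ) T := fun x hx => ⟨ht.1.trans_le hx.1, hx.2⟩
  have hsubI : Icc t T ⊆ uIcc 0 T := by
    rw [uIcc_of_le hT.1.le]; exact Icc_subset_Icc_left ht.1.le
  have h0u : (0 : ℝ) ∈ uIcc 0 T := left_mem_uIcc
  have cΦ := (intervalIntegral.continuousOn_primitive_interval' hfi h0u).mono hsubI
  have cH := (intervalIntegral.continuousOn_primitive_interval' hgi h0u).mono hsubI
  set c : ℝ → ℝ := fun x => sInf (f '' Ioo x 1) with hcdef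
  have h0 : (0 : ℝ) ∈ Ico (0 : ℝ) 1 := by simp
  have hc : ∀ x ∈ Ico t T, 0 < c x ∧ Filter.Tendsto f (nhdsWithin x (Ioi x)) (nhds (c x)) := by
    intro x hx
    have hx0 : 0 < x := ht.1.trans_le hx.1
    have hx1 : x < 1 := hx.2.trans_le hT.2
    have hne : (Ioo x 1).Nonempty := nonempty_Ioo.2 hx1
    have hlb : ∀ z ∈ f '' Ioo x 1, f 0 ≤ z := by
      rintro _ ⟨y, hy, rfl⟩
      exact hmono h0 ⟨(hx0.trans hy.1).le, hy.2⟩ (hx0.trans hy.1).le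
    refine ⟨(hpos 0 h0).trans_le (le_csInf (hne.image f) hlb), ?_⟩
    exact MonotoneOn.tendsto_nhdsWithin_Ioo_right hne
      (hmono.mono fun y hy => ⟨(hx0.trans hy.1).le, hy.2⟩) ⟨f 0, hlb⟩
  have main := image_le_of_deriv_right_le_deriv_boundary (a := t) (b := T)
    (f := fun _ => Real.log (∫ y in (0 : ℝ)..t, f y) +
      (q - 1) * μ * Real.log (∫ y in (0 : ℝ)..t, f y ^ (-(1 / (q - 1)))) - q * m * Real.log t)
    (f' := fun _ => 0)
    (B := fun x => Real.log (∫ y in (0 : ℝ)..x, f y) +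
      (q - 1) * μ * Real.log (∫ y in (0 : ℝ)..x, f y ^ (-(1 / (q - 1)))) - q * m * Real.log x)
    (B' := fun x => c x / (∫ y in (0 : ℝ)..x, f y) +
      (q - 1) * μ * (c x ^ (-(1 / (q - 1))) / (∫ y in (0 : ℝ)..x, f y ^ (-(1 / (q - 1))))) -
        q * m * (1 / x))
    continuousOn_const (fun x _ => hasDerivWithinAt_const _ _ _) le_rfl
    (((cΦ.log fun x hx => (hΦ x (hIcc x hx)).ne').add
      (continuousOn_const.mul (cH.log fun x hx => (hH x (hIcc x hx)).ne'))).sub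
      (continuousOn_const.mul (continuousOn_id.log fun x hx => (hIcc x hx).1.ne'))) ?_ ?_
    (right_mem_Icc.2 ht.2)
  · exact main
  · intro x hx
    have hx' := hIcc x ⟨hx.1, hx.2.le⟩
    obtain ⟨hc0, hct⟩ := hc x hx
    have d1 := right_deriv hf (hfi.mono_set (hsub x hx')) hct
    have d2 := right_deriv (hf.pow_const (-(1 / (q - 1)))) (hgi.mono_set (hsub x hx'))
      (hct.rpow_const (Or.inl hc0.ne'))
    exact ((d1.log (hΦ x hx').ne').add ((d2.log (hH x hx').ne').const_mul _)).sub
      (((hasDerivWithinAt_id x _).log hx'.1.ne').const_mul _)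
  · intro x hx
    have hx' := hIcc x ⟨hx.1, hx.2.le⟩
    obtain ⟨hc0, -⟩ := hc x hx
    have hAx := hA x hx'
    have p1 := hΦ x hx'
    have p2 := hH x hx'
    have p3 := hx'.1
    have p4 : 0 < c x ^ (-(1 / (q - 1))) := Real.rpow_pos_of_pos hc0 _
    generalize hP : (∫ y in (0 : ℝ)..x, f y) = P at *
    generalize hQ : (∫ y in (0 : ℝ)..x, f y ^ (-(1 / (q - 1)))) = Q at *
    have key := amgm_log (q := q) (x := c x * x / P)
      (y := μ * (c x ^ (-(1 / (q - 1))) * x / Q)) (m := m) hq (by positivity)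
      (by have : 0 < μ := by linarith
          positivity) hm (by
        rw [Real.log_div (by positivity) p1.ne', Real.log_mul hc0.ne' p3.ne',
          Real.log_mul (by linarith) (by positivity), Real.log_div (by positivity) p2.ne',
          Real.log_mul p4.ne' p3.ne', Real.log_rpow hc0, hmμ]
        have : (q - 1) * (1 / (q - 1)) = 1 := mul_one_div_cancel (by linarith)
        have e : (q - 1) * (-(1 / (q - 1)) * Real.log (c x)) = - Real.log (c x) := by
          linear_combination (-Real.log (c x)) * this
        linarith)
    have e2 : c x / P + (q - 1) * μ * (c x ^ (-(1 / (q - 1))) / Q) - q * m * (1 / x)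
      = (c x * x / P + (q - 1) * (μ * (c x ^ (-(1 / (q - 1))) * x / Q)) - q * m) / x := by
      field_simp
    change 0 ≤ c x / P + (q - 1) * μ * (c x ^ (-(1 / (q - 1))) / Q) - q * m * (1 / x)
    rw [e2]
    exact div_nonneg (by linarith) p3.le

/-- Jensen in logarithmic form. -/
lemma jensen_log {q t : ℝ} (hq : 1 < q) {f : ℝ → ℝ} (ht : 0 < t)
    (hpos : ∀ x ∈ Ioo (0 : ℝ) t, 0 < f x)
    (hfi : IntervalIntegrable f volume 0 t)
    (hgi : IntervalIntegrable (fun y => f y ^ (-(1 / (q - 1)))) volume 0 t) :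
    0 ≤ Real.log (∫ y in (0 : ℝ)..t, f y) +
      (q - 1) * Real.log (∫ y in (0 : ℝ)..t, f y ^ (-(1 / (q - 1)))) - q * Real.log t := by
  have p1 := intervalIntegral.intervalIntegral_pos_of_pos_on hfi hpos ht
  have p2 := intervalIntegral.intervalIntegral_pos_of_pos_on hgi
    (fun y hy => Real.rpow_pos_of_pos (hpos y hy) _) ht
  set P := ∫ y in (0 : ℝ)..t, f y with hP
  set Q := ∫ y in (0 : ℝ)..t, f y ^ (-(1 / (q - 1))) with hQ
  set l := (Real.log P + (q - 1) * Real.log Q) / q with hl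
  have hlq : q * l = Real.log P + (q - 1) * Real.log Q := by
    rw [hl]; field_simp
  set m := Real.exp l with hm
  have hm0 : 0 < m := Real.exp_pos _
  have hlm : Real.log m = l := Real.log_exp _
  have hpt : ∀ y ∈ Ioo (0 : ℝ) t, q ≤ m / P * f y + (q - 1) * (m / Q) * f y ^ (-(1 / (q - 1))) := by
    intro y hy
    have hfy := hpos y hy
    have hgy : 0 < f y ^ (-(1 / (q - 1))) := Real.rpow_pos_of_pos hfy _
    have := amgm_log (q := q) (x := m / P * f y) (y := m / Q * f y ^ (-(1 / (q - 1)))) (m := 1)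
      hq (by positivity) (by positivity) one_pos (by
        rw [Real.log_mul (by positivity) hfy.ne', Real.log_mul (by positivity) hgy.ne',
          Real.log_div hm0.ne' p1.ne', Real.log_div hm0.ne' p2.ne', Real.log_rpow hfy, hlm,
          Real.log_one]
        have : (q - 1) * (1 / (q - 1)) = 1 := mul_one_div_cancel (by linarith)
        have e : (q - 1) * (-(1 / (q - 1)) * Real.log (f y)) = - Real.log (f y) := by
          linear_combination (-Real.log (f y)) * this
        linarith)
    linarith
  have hint := intervalIntegral.integral_mono_on_of_le_Ioo ht.le
    (intervalIntegrable_const (c := q) (μ := volume))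
    ((hfi.const_mul (m / P)).add (hgi.const_mul ((q - 1) * (m / Q)))) hpt
  rw [intervalIntegral.integral_add (hfi.const_mul (m / P)) (hgi.const_mul ((q - 1) * (m / Q))),
    intervalIntegral.integral_const_mul, intervalIntegral.integral_const_mul,
    intervalIntegral.integral_const, ← hP, ← hQ] at hint
  have e1 : m / P * P = m := by field_simp
  have e2 : (q - 1) * (m / Q) * Q = (q - 1) * m := by field_simp
  rw [e1, e2, smul_eq_mul] at hint
  have : t ≤ m := by nlinarith
  have := Real.log_le_log ht this
  rw [hlm] at this
  nlinarith

/-- The choice of parameters. -/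
lemma param {q M p₀ p : ℝ} (hq : 1 < q) (hM : 1 ≤ M) (h1 : 1 ≤ p₀)
    (hp₀eq : ((q - p₀) / (q - 1)) * (M * p₀) ^ (1 / (q - 1)) = 1)
    (hp : p₀ < p) (hpq : p < q) :
    ∃ μ m : ℝ, 1 < μ ∧ 0 < m ∧ q * Real.log m = (q - 1) * Real.log μ - Real.log M ∧
      (q - p) * (μ - 1) < q * m - q := by
  have hM0 : 0 < M := by linarith
  set η := (q - p) / (q - 1) with hη
  have hq1 : 0 < q - 1 := by linarith
  have hη0 : 0 < η := div_pos (by linarith) hq1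
  have hη1 : η < 1 := by rw [hη, div_lt_one hq1]; linarith
  -- log of the equation
  have hlog : (q - 1) * (Real.log (q - p₀) - Real.log (q - 1)) + Real.log M + Real.log p₀ = 0 := by
    have := congrArg Real.log hp₀eq
    rw [Real.log_mul (div_pos (by linarith) hq1).ne' (Real.rpow_pos_of_pos (by positivity) _).ne',
      Real.log_rpow (by positivity), Real.log_div (by linarith) hq1.ne',
      Real.log_mul hM0.ne' (by linarith), Real.log_one] at this
    have h2 : (q - 1) * (1 / (q - 1)) = 1 := mul_one_div_cancel hq1.ne'
    linear_combination (q - 1) * this - (Real.log M + Real.log p₀) * h2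
  have hlη : Real.log η = Real.log (q - p) - Real.log (q - 1) :=
    Real.log_div (by linarith) hq1.ne'
  have a1 : Real.log p - Real.log p₀ < p - p₀ := by
    have := Real.log_lt_sub_one_of_pos (x := p / p₀) (by apply div_pos <;> linarith)
      (by rw [ne_eq, div_eq_one_iff_eq (by linarith)]; exact hp.ne')
    rw [Real.log_div (by linarith) (by linarith)] at this
    have e : p / p₀ - 1 = (p - p₀) / p₀ := by field_simp
    rw [e] at this
    exact this.trans_le (div_le_self (by linarith) h1)
  have a2 : p - p₀ ≤ (q - 1) * (Real.log (q - p₀) - Real.log (q - p)) := by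
    have := Real.log_le_sub_one_of_pos (x := (q - p) / (q - p₀)) (by apply div_pos <;> linarith)
    rw [Real.log_div (by linarith) (by linarith)] at this
    have hq0 : 0 < q - p₀ := by linarith
    have e : (q - p) / (q - p₀) - 1 = - ((p - p₀) / (q - p₀)) := by field_simp; ring
    rw [e] at this
    have h3 : (q - 1) * ((p - p₀) / (q - p₀)) ≤ (q - 1) * (Real.log (q - p₀) - Real.log (q - p)) :=
      mul_le_mul_of_nonneg_left (by linarith) hq1.le
    refine le_trans ?_ h3
    rw [mul_div_assoc', le_div_iff₀ hq0]
    nlinarith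
  have key : Real.log M + Real.log p + (q - 1) * Real.log η < 0 := by
    rw [hlη]; nlinarith
  have hlp : 0 < Real.log p := Real.log_pos (by linarith)
  have hlη0 : Real.log η < 0 := Real.log_neg hη0 hη1
  set m := Real.exp ((1 - q) * Real.log η - Real.log M) with hm
  set μ := Real.exp (-q * Real.log η - Real.log M) with hμ
  have hmμ : μ * η = m := by
    rw [hμ, hm]; nth_rewrite 2 [← Real.exp_log hη0]; rw [← Real.exp_add]; congr 1; ring
  refine ⟨μ, m, ?_, Real.exp_pos _, ?_, ?_⟩
  · rw [hμ, Real.one_lt_exp_iff]; nlinarith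
  · rw [hμ, hm, Real.log_exp, Real.log_exp]; ring
  · have hpm : p < m := by
      rw [hm, ← Real.log_lt_iff_lt_exp (by linarith)]; linarith
    have e : q - p = (q - 1) * η := by rw [hη]; field_simp
    have : (q - p) * (μ - 1) = (q - 1) * m - (q - p) := by
      rw [← hmμ]; linear_combination μ * e
    rw [this]; linarith

theorem muckenhoupt_Ap_from_Aq_on_initial_intervals (q M p₀ p : ℝ)
    (hq : 1 < q) (hM : 1 ≤ M) (hp₀mem : p₀ ∈ Set.Icc 1 q)
    (hp₀eq : ((q - p₀) / (q - 1)) * (M * p₀) ^ (1 / (q - 1)) = 1)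
    (hp : p ∈ Set.Ioc p₀ q) :
    ∃ M' : ℝ, 0 < M' ∧ ∀ f : ℝ → ℝ, Measurable f →
      MonotoneOn f (Set.Ico 0 1) →
      (∀ x ∈ Set.Ico (0 : ℝ) 1, 0 < f x) →
      (∀ t ∈ Set.Ioc (0 : ℝ) 1,
        ((1 / t) * ∫ y in (0 : ℝ)..t, f y) *
          ((1 / t) * ∫ y in (0 : ℝ)..t, f y ^ (-(1 / (q - 1)))) ^ (q - 1) ≤ M) →
      (∀ t ∈ Set.Ioc (0 : ℝ) 1,
        ((1 / t) * ∫ y in (0 : ℝ)..t, f y) *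
          ((1 / t) * ∫ y in (0 : ℝ)..t, f y ^ (-(1 / (p - 1)))) ^ (p - 1) ≤ M') ∧
      IntegrableOn (fun y => f y ^ (-(1 / (p - 1)))) (Set.Ioo 0 1) := by
  have hp1 : 0 < p - 1 := by linarith [hp.1, hp₀mem.1]
  have hw : 0 ≤ 1 / (p - 1) := by positivity
  have hM0 : 0 < M := by linarith
  rcases eq_or_lt_of_le hp.2 with rfl | hpq
  · exact ⟨M, hM0, fun f hf hmono hpos hA => ⟨hA, integrableOn_rpow_neg hf hmono hpos hw⟩⟩
  obtain ⟨μ, m, hμ, hm, hmμ, hlt⟩ := param hq hM hp₀mem.1 hp₀eq hp.1 hpq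
  have hq1 : 0 < q - 1 := by linarith
  set κ := (q - 1) * (μ - 1) with hκ
  have hκ0 : 0 < κ := mul_pos hq1 (by linarith)
  set e := (q * m - q) / κ with he
  have heκ : e * κ = q * m - q := by rw [he]; field_simp
  set r := (q - 1) / (p - 1) with hr
  have hr0 : 0 < r := div_pos hq1 hp1
  have hrp : r * (p - 1) = q - 1 := by rw [hr]; field_simp
  set δ := 1 - r * (1 - e) with hδ
  have hδ0 : 0 < δ := by
    have h1 : (q - p) < (q - 1) * e := by
      have : (q - p) * (μ - 1) < ((q - 1) * e) * (μ - 1) := by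
        calc _ < q * m - q := hlt
          _ = _ := by rw [← heκ, hκ]; ring
      exact lt_of_mul_lt_mul_right this (by linarith)
    have h2 : δ = (p - 1 - (q - 1) * (1 - e)) / (p - 1) := by
      rw [hδ, hr]; field_simp
    rw [h2]; exact div_pos (by linarith) hp1
  set C := Real.exp (r * (Real.log M / κ)) / δ with hC
  have hC0 : 0 < C := div_pos (Real.exp_pos _) hδ0
  refine ⟨M * C ^ (p - 1), by positivity, fun f hf hmono hpos hA =>
    ⟨fun T hT => ?_, integrableOn_rpow_neg hf hmono hpos hw⟩⟩
  by_cases hfi : IntervalIntegrable f volume 0 T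
  swap
  · rw [intervalIntegral.integral_undef hfi]; simp only [mul_zero, zero_mul]; positivity
  have hs : 0 ≤ 1 / (q - 1) := by positivity
  have hgi := intervalIntegrable_rpow_neg hf hmono hpos hs hT
  have hwi := intervalIntegrable_rpow_neg hf hmono hpos hw hT
  have hsub : ∀ x ∈ Ioc (0 : ℝ) T, uIcc 0 x ⊆ uIcc 0 T := fun x hx => by
    rw [uIcc_of_le hx.1.le, uIcc_of_le hT.1.le]; exact Icc_subset_Icc_right hx.2
  have hΦ : ∀ x ∈ Ioc (0 : ℝ) T, 0 < ∫ y in (0 : ℝ)..x, f y := fun x hx =>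
    intervalIntegral.intervalIntegral_pos_of_pos_on (hfi.mono_set (hsub x hx))
      (fun y hy => hpos y ⟨hy.1.le, hy.2.trans_le (hx.2.trans hT.2)⟩) hx.1
  have hH : ∀ x ∈ Ioc (0 : ℝ) T, 0 < ∫ y in (0 : ℝ)..x, f y ^ (-(1 / (q - 1))) := fun x hx =>
    intervalIntegral.intervalIntegral_pos_of_pos_on (hgi.mono_set (hsub x hx))
      (fun y hy => Real.rpow_pos_of_pos (hpos y ⟨hy.1.le, hy.2.trans_le (hx.2.trans hT.2)⟩) _) hx.1
  have hAlog : ∀ t ∈ Ioc (0 : ℝ) T, Real.log (∫ y in (0 : ℝ)..t, f y) +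
      (q - 1) * Real.log (∫ y in (0 : ℝ)..t, f y ^ (-(1 / (q - 1)))) - q * Real.log t ≤
        Real.log M := by
    intro t ht
    have h := hA t ⟨ht.1, ht.2.trans hT.2⟩
    have p1 := hΦ t ht
    have p2 := hH t ht
    have p3 : 0 < 1 / t := one_div_pos.2 ht.1
    have h := Real.log_le_log (mul_pos (mul_pos p3 p1)
      (Real.rpow_pos_of_pos (mul_pos p3 p2) _)) h
    rw [Real.log_mul (mul_pos p3 p1).ne' (Real.rpow_pos_of_pos (mul_pos p3 p2) _).ne',
      Real.log_rpow (mul_pos p3 p2), Real.log_mul p3.ne' p1.ne', Real.log_mul p3.ne' p2.ne',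
      one_div, Real.log_inv] at h
    linarith
  have hTT : T ∈ Ioc (0 : ℝ) T := ⟨hT.1, le_rfl⟩
  set G := ∫ y in (0 : ℝ)..T, f y ^ (-(1 / (q - 1))) with hG
  have hG0 : 0 < G := hH T hTT
  set D := Real.exp (r * (Real.log M / κ + Real.log G - e * Real.log T)) with hD
  -- pointwise bound
  have hpt : ∀ t ∈ Ioo (0 : ℝ) T, f t ^ (-(1 / (p - 1))) ≤ D * t ^ (δ - 1) := by
    intro t ht
    have ht' : t ∈ Ioc (0 : ℝ) T := ⟨ht.1, ht.2.le⟩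
    have ht1 : t ∈ Ico (0 : ℝ) 1 := ⟨ht.1.le, ht.2.trans_le hT.2⟩
    have hft := hpos t ht1
    have l1 := lyapunov hq hμ hm hmμ hf hmono hpos hT hfi hAlog ht'
    have l2 := hAlog T hTT
    have l3 := jensen_log hq ht.1 (fun y hy => hpos y ⟨hy.1.le, hy.2.trans ht1.2⟩)
      (hfi.mono_set (hsub t ht')) (hgi.mono_set (hsub t ht'))
    have h4 : t * f t ^ (-(1 / (q - 1))) ≤ ∫ y in (0 : ℝ)..t, f y ^ (-(1 / (q - 1))) := by
      have := intervalIntegral.integral_mono_on_of_le_Ioo ht.1.le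
        (intervalIntegrable_const (c := f t ^ (-(1 / (q - 1)))) (μ := volume))
        (hgi.mono_set (hsub t ht')) (fun y hy =>
          Real.rpow_le_rpow_of_nonpos (hpos y ⟨hy.1.le, hy.2.trans ht1.2⟩)
            (hmono ⟨hy.1.le, hy.2.trans ht1.2⟩ ht1 hy.2.le) (by linarith))
      simpa using this
    have l4 := Real.log_le_log (mul_pos ht.1 (Real.rpow_pos_of_pos hft _)) h4
    rw [Real.log_mul ht.1.ne' (Real.rpow_pos_of_pos hft _).ne', Real.log_rpow hft] at l4
    rw [← hG] at l1 l2
    generalize Real.log (∫ y in (0 : ℝ)..t, f y ^ (-(1 / (q - 1)))) = lH at *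
    generalize Real.log (∫ y in (0 : ℝ)..t, f y) = lP at *
    generalize Real.log (∫ y in (0 : ℝ)..T, f y) = lPT at *
    have l5 : lH ≤ Real.log M / κ + Real.log G - e * Real.log T + e * Real.log t := by
      have h5 : κ * lH ≤ κ * (Real.log M / κ + Real.log G - e * Real.log T + e * Real.log t) := by
        have e1 : κ * (Real.log M / κ + Real.log G - e * Real.log T + e * Real.log t) =
          Real.log M + κ * Real.log G + (e * κ) * (Real.log t - Real.log T) := by
          field_simp; ring
        rw [e1, heκ]
        have e2 : (q - 1) * μ = q - 1 + κ := by rw [hκ]; ring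
        rw [e2] at l1
        linarith
      exact le_of_mul_le_mul_left h5 hκ0
    have e3 : -(1 / (p - 1)) = r * (-(1 / (q - 1))) := by rw [hr]; field_simp
    rw [← Real.log_le_log_iff (Real.rpow_pos_of_pos hft _)
      (mul_pos (Real.exp_pos _) (Real.rpow_pos_of_pos ht.1 _)), Real.log_rpow hft,
      Real.log_mul (Real.exp_pos _).ne' (Real.rpow_pos_of_pos ht.1 _).ne', Real.log_exp,
      Real.log_rpow ht.1, e3]
    have h6 := mul_le_mul_of_nonneg_left (l4.trans l5) hr0.le
    rw [hδ]
    linarith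
  have hint := intervalIntegral.integral_mono_on_of_le_Ioo hT.1.le hwi
    ((intervalIntegral.intervalIntegrable_rpow' (by linarith : -1 < δ - 1)).const_mul D) hpt
  rw [intervalIntegral.integral_const_mul, integral_rpow (Or.inl (by linarith)), sub_add_cancel,
    Real.zero_rpow hδ0.ne', sub_zero] at hint
  have hT0 := hT.1
  have hP0 := hΦ T hTT
  have hrhs : (1 / T) * (D * (T ^ δ / δ)) = C * ((1 / T) * G) ^ r := by
    have x1 : T ^ δ = Real.exp (Real.log T * δ) := Real.rpow_def_of_pos hT0 _
    have x2 : ((1 / T) * G) ^ r = Real.exp ((Real.log G - Real.log T) * r) := by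
      rw [Real.rpow_def_of_pos (by positivity), Real.log_mul (by positivity) hG0.ne', one_div,
        Real.log_inv]; ring_nf
    have x3 : 1 / T = Real.exp (- Real.log T) := by
      rw [Real.exp_neg, Real.exp_log hT0, one_div]
    rw [x2, x1, x3, hC, hD]
    rw [show ∀ a b c : ℝ, a * (b * (c / δ)) = (a * b * c) / δ by intros; ring,
      show ∀ a b : ℝ, a / δ * b = (a * b) / δ by intros; ring, ← Real.exp_add, ← Real.exp_add,
      ← Real.exp_add, hδ]
    congr 2; ring
  have hav : (1 / T) * (∫ y in (0 : ℝ)..T, f y ^ (-(1 / (p - 1)))) ≤ C * ((1 / T) * G) ^ r := by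
    rw [← hrhs]; exact mul_le_mul_of_nonneg_left hint (by positivity)
  have hI0 : 0 ≤ ∫ y in (0 : ℝ)..T, f y ^ (-(1 / (p - 1))) :=
    (intervalIntegral.intervalIntegral_pos_of_pos_on hwi
      (fun y hy => Real.rpow_pos_of_pos (hpos y ⟨hy.1.le, hy.2.trans_le hT.2⟩) _) hT0).le
  have hpow := Real.rpow_le_rpow (by positivity) hav hp1.le
  rw [Real.mul_rpow hC0.le (by positivity), ← Real.rpow_mul (by positivity), hrp] at hpow
  calc _ ≤ ((1 / T) * ∫ y in (0 : ℝ)..T, f y) * (C ^ (p - 1) * ((1 / T) * G) ^ (q - 1)) :=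
        mul_le_mul_of_nonneg_left hpow (by positivity)
    _ = (((1 / T) * ∫ y in (0 : ℝ)..T, f y) * ((1 / T) * G) ^ (q - 1)) * C ^ (p - 1) := by ring
    _ ≤ M * C ^ (p - 1) := mul_le_mul_of_nonneg_right (hA T hT) (by positivity)
end
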